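/- Let f be a cellular automaton on A^ℤ. If f is the identity map on its generic limit set ω̃(f), then ω̃(f) is a mixing subshift. -/

import Mathlib

open Filter Set Function

namespace Gls

variable {A : Type*}

/-- The left shift map on `A^ℤ`. -/
def shift (x : ℤ → A) : ℤ → A := fun i => x (i + 1)

/-- A cellular automaton: a continuous shift-commuting self-map of the full shift. -/
def IsCA [TopologicalSpace A] (f : (ℤ → A) → (ℤ → A)) : Prop :=
  Continuous f ∧ f ∘ shift = shift ∘ f

/-- The set of limit points of the forward orbit of `x` under `f`. -/
def omegaSet [TopologicalSpace A] (f : (ℤ → A) → (ℤ → A)) (x : ℤ → A) : Set (ℤ → A) :=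
  {y | MapClusterPt y atTop fun t => f^[t] x}

/-- The realm of attraction of `Y`. -/
def realm [TopologicalSpace A] (f : (ℤ → A) → (ℤ → A)) (Y : Set (ℤ → A)) : Set (ℤ → A) :=
  {x | omegaSet f x ⊆ Y}

/-- The generic limit set: the intersection of all closed sets whose realm is comeager. -/
def genLimitSet [TopologicalSpace A] (f : (ℤ → A) → (ℤ → A)) : Set (ℤ → A) :=
  ⋂₀ {C | IsClosed C ∧ realm f C ∈ residual (ℤ → A)}

/-- The word `x_{[i, i+n)}` of length `n` read in the configuration `x` from position `i`. -/
def word (x : ℤ → A) (i : ℤ) (n : ℕ) : List A :=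
  (List.range n).map fun k => x (i + k)

/-- The cylinder set `[w]_i`. -/
def cylinder (w : List A) (i : ℤ) : Set (ℤ → A) := {x | word x i w.length = w}

/-- The language of `X`: all finite words occurring in points of `X`. -/
def lang (X : Set (ℤ → A)) : Set (List A) :=
  {w | ∃ x ∈ X, ∃ i : ℤ, word x i w.length = w}


/-- A subshift `X` is mixing if for all `u, v ∈ L(X)` there exists `N` such that for every
`n ≥ N` there is a word `w` of length `n` with `u w v ∈ L(X)`. -/
def IsMixing {A : Type*} (X : Set (ℤ → A)) : Prop :=
  ∀ u ∈ lang X, ∀ v ∈ lang X, ∃ N : ℕ, ∀ n ≥ N, ∃ w : List A,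
    w.length = n ∧ u ++ w ++ v ∈ lang X

/-!
The points of `ω̃(f)` are fixed, so the orbit of a generic point, which is attracted to `ω̃(f)`,
eventually stops changing on every clopen set and hence converges. If a closed set `K` is a
neighbourhood of a point of `ω̃(f)`, then by the Baire category argument some nonempty open set
consists of points whose orbits are eventually in `K`; otherwise the generic limits would avoid the
interior of `K`, and `ω̃(f)` with them. Given two such neighbourhoods `K`, `K'` with open sets `V`,
`V'`, mixing of the full shift makes `V ∩ σ⁻ᵏ V'` nonempty for all but finitely many `k`; it then
contains a generic point, and the limit of its orbit is a point of `ω̃(f)` in `K ∩ σ⁻ᵏ K'`.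
-/

section Convergence

variable {X : Type*} [TopologicalSpace X] [CompactSpace X]

theorem eventually_mem_of_forall_mapClusterPt_mem {ι : Type*} {l : Filter ι} {u : ι → X}
    {U : Set X} (hU : IsOpen U) (h : ∀ y, MapClusterPt y l u → y ∈ U) : ∀ᶠ t in l, u t ∈ U := by
  by_contra hfreq
  obtain ⟨y, hyU, hy⟩ :=
    hU.isClosed_compl.isCompact.exists_mapClusterPt_of_frequently (not_eventually.1 hfreq)
  exact hyU (h y hy)

theorem eventually_iterate_mem_of_forall_mapClusterPt_isFixedPt {f : X → X} (hf : Continuous f)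
    {x y : X} (hfix : ∀ z, MapClusterPt z atTop (fun t => f^[t] x) → IsFixedPt f z)
    (hy : MapClusterPt y atTop fun t => f^[t] x) {U : Set X} (hU : IsClopen U) (hyU : y ∈ U) :
    ∀ᶠ t in atTop, f^[t] x ∈ U := by
  have hstay : ∀ᶠ t in atTop, f^[t] x ∈ Uᶜ ∪ f ⁻¹' U :=
    eventually_mem_of_forall_mapClusterPt_mem
      (hU.compl.isOpen.union (hU.isOpen.preimage hf)) fun z hz => by
        rw [mem_union, mem_preimage, (hfix z hz).eq]
        exact (em (z ∈ U)).symm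
  obtain ⟨T, hT⟩ := eventually_atTop.1 hstay
  obtain ⟨n, hTn, hn⟩ := frequently_atTop.1 (hy.frequently (hU.isOpen.mem_nhds hyU)) T
  refine eventually_atTop.2 ⟨n, fun t ht => ?_⟩
  induction t, ht using Nat.le_induction with
  | base => exact hn
  | succ t hnt ih =>
    rw [iterate_succ_apply']
    exact (hT t (hTn.trans hnt)).resolve_left (not_not_intro ih)

theorem exists_tendsto_iterate_of_forall_mapClusterPt_isFixedPt [TotallySeparatedSpace X]
    {f : X → X} (hf : Continuous f) {x : X}
    (hfix : ∀ z, MapClusterPt z atTop (fun t => f^[t] x) → IsFixedPt f z) :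
    ∃ y, Tendsto (fun t => f^[t] x) atTop (nhds y) := by
  obtain ⟨y, hy⟩ := exists_clusterPt_of_compactSpace (map (fun t => f^[t] x) atTop)
  refine ⟨y, tendsto_nhds_of_unique_mapClusterPt fun z hz => by_contra fun hzy => ?_⟩
  obtain ⟨U, hU, hzU, hyU⟩ := exists_isClopen_of_totally_separated hzy
  have hmem := eventually_iterate_mem_of_forall_mapClusterPt_isFixedPt hf hfix hz hU hzU
  have hnotMem := eventually_iterate_mem_of_forall_mapClusterPt_isFixedPt hf hfix hy hU.compl hyU
  obtain ⟨t, ht, ht'⟩ := (hmem.and hnotMem).exists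
  exact ht' ht

end Convergence

section GenericLimitSet

variable [TopologicalSpace A] {f : (ℤ → A) → (ℤ → A)}

theorem omegaSet_eq_singleton [T2Space A] {x y : ℤ → A}
    (h : Tendsto (fun t => f^[t] x) atTop (nhds y)) : omegaSet f x = {y} := by
  refine Subset.antisymm (fun z hz => ?_) (singleton_subset_iff.2 h.mapClusterPt)
  exact eq_of_nhds_neBot (NeBot.mono hz (inf_le_inf_left _ h))

theorem mapsTo_omegaSet_of_commute {h : (ℤ → A) → (ℤ → A)} (hh : Continuous h)
    (hcomm : Function.Commute f h) (x : ℤ → A) : MapsTo h (omegaSet f x) (omegaSet f (h x)) := by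
  intro y hy
  have horbit : (fun t => f^[t] (h x)) = h ∘ fun t => f^[t] x :=
    funext fun t => hcomm.iterate_left t x
  rw [omegaSet, mem_ofPred_eq, horbit]
  exact MapClusterPt.continuousAt_comp hh.continuousAt hy

theorem isClosed_genLimitSet (f : (ℤ → A) → (ℤ → A)) : IsClosed (genLimitSet f) :=
  isClosed_sInter fun _ hC => hC.1

theorem genLimitSet_subset {C : Set (ℤ → A)} (hC : IsClosed C)
    (hr : realm f C ∈ residual (ℤ → A)) : genLimitSet f ⊆ C :=
  sInter_subset_of_mem ⟨hC, hr⟩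

theorem realm_sInter (f : (ℤ → A) → (ℤ → A)) (S : Set (Set (ℤ → A))) :
    realm f (⋂₀ S) = ⋂ C ∈ S, realm f C := by
  ext x
  simp only [realm, subset_sInter_iff, mem_ofPred_eq, mem_iInter]

theorem realm_genLimitSet_mem_residual [SecondCountableTopology A] (f : (ℤ → A) → (ℤ → A)) :
    realm f (genLimitSet f) ∈ residual (ℤ → A) := by
  set S : Set (Set (ℤ → A)) := {C | IsClosed C ∧ realm f C ∈ residual (ℤ → A)}
  obtain ⟨T, hT, hTS⟩ := eq_closed_inter_countable (fun C : S => (C : Set (ℤ → A)))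
    fun C => C.2.1
  have hgen : genLimitSet f = ⋂₀ (Subtype.val '' T) := by
    rw [sInter_image, hTS, ← sInter_eq_iInter]
    rfl
  rw [hgen, realm_sInter, countable_bInter_mem (hT.image _)]
  rintro _ ⟨C, -, rfl⟩
  exact C.2.2

theorem mapsTo_genLimitSet_of_commute {h : (ℤ → A) ≃ₜ (ℤ → A)} (hcomm : Function.Commute f h) :
    MapsTo h (genLimitSet f) (genLimitSet f) := by
  rintro x hx C ⟨hC, hr⟩
  refine genLimitSet_subset (hC.preimage h.continuous) ?_ hx
  filter_upwards [tendsto_residual_of_isOpenMap h.continuous h.isOpenMap hr] with z hz y hy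
  exact hz (mapsTo_omegaSet_of_commute h.continuous hcomm z hy)

theorem image_genLimitSet_of_commute {h : (ℤ → A) ≃ₜ (ℤ → A)} (hcomm : Function.Commute f h) :
    h '' genLimitSet f = genLimitSet f := by
  have hcomm' : Function.Commute f h.symm :=
    hcomm.inverses_right h.right_inv h.left_inv
  refine Subset.antisymm (mapsTo_genLimitSet_of_commute hcomm).image_subset fun x hx => ?_
  exact ⟨h.symm x, mapsTo_genLimitSet_of_commute hcomm' hx, h.apply_symm_apply x⟩

theorem exists_isOpen_forall_eventually_iterate_mem [T2Space A] (hf : Continuous f)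
    (hconv : ∀ᶠ x in residual (ℤ → A), ∃ y, Tendsto (fun t => f^[t] x) atTop (nhds y))
    {K : Set (ℤ → A)} (hK : IsClosed K) {z : ℤ → A} (hz : z ∈ genLimitSet f) (hzK : K ∈ nhds z) :
    ∃ V : Set (ℤ → A), IsOpen V ∧ V.Nonempty ∧ ∀ x ∈ V, ∀ᶠ t in atTop, f^[t] x ∈ K := by
  let stay (n : ℕ) : Set (ℤ → A) := ⋂ t ≥ n, f^[t] ⁻¹' K
  have hstay (n : ℕ) : IsClosed (stay n) :=
    isClosed_biInter fun t _ => hK.preimage (hf.iterate t)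
  suffices h : ∃ n, (interior (stay n)).Nonempty by
    obtain ⟨n, hn⟩ := h
    refine ⟨interior (stay n), isOpen_interior, hn, fun x hx => ?_⟩
    exact eventually_atTop.2 ⟨n, mem_iInter₂.1 (interior_subset hx)⟩
  by_contra! hempty
  have hleave : ⋂ n, (stay n)ᶜ ∈ residual (ℤ → A) := countable_iInter_mem.2 fun n =>
    residual_of_dense_open (hstay n).isOpen_compl (interior_eq_empty_iff_dense_compl.1 (hempty n))
  have havoid : realm f (interior K)ᶜ ∈ residual (ℤ → A) := by
    filter_upwards [hleave, hconv] with x hx ⟨y, hy⟩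
    rw [realm, mem_ofPred_eq, omegaSet_eq_singleton hy, singleton_subset_iff]
    intro hyK
    obtain ⟨n, hn⟩ := eventually_atTop.1 (hy.eventually_mem (mem_interior_iff_mem_nhds.1 hyK))
    exact mem_iInter.1 hx n (mem_iInter₂.2 hn)
  exact genLimitSet_subset isOpen_interior.isClosed_compl havoid hz
    (mem_interior_iff_mem_nhds.2 hzK)

end GenericLimitSet

section Shift

variable [TopologicalSpace A]

/-- The power `σᵏ` of the left shift for `k : ℤ`, as a homeomorphism of the full shift. -/
def shiftBy (k : ℤ) : (ℤ → A) ≃ₜ (ℤ → A) where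
  toFun x i := x (i + k)
  invFun x i := x (i - k)
  left_inv x := by simp
  right_inv x := by simp
  continuous_toFun := by fun_prop
  continuous_invFun := by fun_prop

@[simp]
theorem shiftBy_apply (k : ℤ) (x : ℤ → A) (i : ℤ) : shiftBy k x i = x (i + k) := rfl

theorem coe_shiftBy_zero : ⇑(shiftBy 0 : (ℤ → A) ≃ₜ (ℤ → A)) = id := by
  ext x i
  rw [shiftBy_apply, add_zero, id]

theorem coe_shiftBy_add (k l : ℤ) :
    ⇑(shiftBy (k + l) : (ℤ → A) ≃ₜ (ℤ → A)) = shiftBy k ∘ shiftBy l := by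
  ext x i
  simp only [comp_apply, shiftBy_apply, add_assoc]

theorem coe_shiftBy_one : ⇑(shiftBy 1 : (ℤ → A) ≃ₜ (ℤ → A)) = shift := rfl

theorem IsCA.commute_shiftBy {f : (ℤ → A) → (ℤ → A)} (hf : IsCA f) (k : ℤ) :
    Function.Commute f (shiftBy k) := by
  have hone : Function.Commute f (shiftBy 1) := congrFun hf.2
  have hnegOne : Function.Commute f (shiftBy (-1)) :=
    hone.inverses_right (shiftBy 1).right_inv (shiftBy 1).left_inv
  induction k with
  | zero =>
    rw [coe_shiftBy_zero]
    exact Function.Commute.id_right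
  | succ n ih =>
    rw [coe_shiftBy_add]
    exact ih.comp_right hone
  | pred n ih =>
    rw [sub_eq_add_neg, coe_shiftBy_add]
    exact ih.comp_right hnegOne

end Shift

section TopologicalMixing

/-- Topological mixing of the shift action of `ℤ` on `X ⊆ A^ℤ`: any two nonempty relatively open
subsets of `X` meet after shifting one of them by any `k : ℤ` outside a finite set. -/
def IsTopologicallyMixing [TopologicalSpace A] (X : Set (ℤ → A)) : Prop :=
  ∀ U V : Set (ℤ → A), IsOpen U → IsOpen V → (X ∩ U).Nonempty → (X ∩ V).Nonempty →
    ∀ᶠ k in cofinite, (X ∩ (U ∩ shiftBy k ⁻¹' V)).Nonempty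

theorem isTopologicallyMixing_univ [TopologicalSpace A] :
    IsTopologicallyMixing (univ : Set (ℤ → A)) := by
  rintro U V hU hV ⟨p, -, hp⟩ ⟨q, -, hq⟩
  obtain ⟨I, u, hu, hIU⟩ := isOpen_pi_iff.1 hU p hp
  obtain ⟨J, v, hv, hJV⟩ := isOpen_pi_iff.1 hV q hq
  filter_upwards [(Finset.image₂ (· - ·) I J).eventually_cofinite_notMem] with k hk
  have hdisj (j : ℤ) (hj : j ∈ J) : j + k ∉ I := fun hi =>
    hk (Finset.mem_image₂.2 ⟨j + k, hi, j, hj, add_sub_cancel_left j k⟩)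
  refine ⟨I.piecewise p fun i => q (i - k), mem_univ _, hIU fun i hi => ?_, hJV fun j hj => ?_⟩
  · rw [I.piecewise_eq_of_mem _ _ hi]
    exact (hu i hi).2
  · rw [shiftBy_apply, I.piecewise_eq_of_notMem _ _ (hdisj j hj), add_sub_cancel_right]
    exact (hv j hj).2

theorem isTopologicallyMixing_genLimitSet [TopologicalSpace A] [T3Space A]
    [SecondCountableTopology A] [BaireSpace (ℤ → A)] {f : (ℤ → A) → (ℤ → A)} (hf : IsCA f)
    (hconv : ∀ᶠ x in residual (ℤ → A), ∃ y, Tendsto (fun t => f^[t] x) atTop (nhds y)) :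
    IsTopologicallyMixing (genLimitSet f) := by
  rintro U U' hU hU' ⟨z, hz, hzU⟩ ⟨z', hz', hzU'⟩
  obtain ⟨K, hzK, hK, hKU⟩ := exists_mem_nhds_isClosed_subset (hU.mem_nhds hzU)
  obtain ⟨K', hzK', hK', hKU'⟩ := exists_mem_nhds_isClosed_subset (hU'.mem_nhds hzU')
  obtain ⟨V, hV, hVne, hVK⟩ :=
    exists_isOpen_forall_eventually_iterate_mem hf.1 hconv hK hz hzK
  obtain ⟨V', hV', hVne', hVK'⟩ :=
    exists_isOpen_forall_eventually_iterate_mem hf.1 hconv hK' hz' hzK'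
  rw [← univ_inter V] at hVne
  rw [← univ_inter V'] at hVne'
  filter_upwards [isTopologicallyMixing_univ V V' hV hV' hVne hVne'] with k hk
  rw [univ_inter] at hk
  have hdense : Dense {x | x ∈ realm f (genLimitSet f) ∧
      ∃ y, Tendsto (fun t => f^[t] x) atTop (nhds y)} :=
    dense_of_mem_residual (inter_mem (realm_genLimitSet_mem_residual f) hconv)
  obtain ⟨x, ⟨hxV, hxV'⟩, hx, y, hxy⟩ :=
    hdense.inter_open_nonempty _ (hV.inter (hV'.preimage (shiftBy k).continuous)) hk
  have hxy' : Tendsto (fun t => f^[t] (shiftBy k x)) atTop (nhds (shiftBy k y)) := by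
    simp only [((hf.commute_shiftBy k).iterate_left _).eq]
    exact ((shiftBy k).continuous.tendsto y).comp hxy
  exact ⟨y, hx hxy.mapClusterPt, hKU (hK.mem_of_tendsto hxy (hVK x hxV)),
    hKU' (hK'.mem_of_tendsto hxy' (hVK' _ hxV'))⟩

end TopologicalMixing

section Words

-- In the body of `word` the index `k` is an integer: `List.range n` is coerced to `List ℤ`
-- through the list monad.
theorem word_eq_map_range (x : ℤ → A) (i : ℤ) (n : ℕ) :
    word x i n = (List.range n).map fun k : ℕ => x (i + k) := by
  simp only [word, bind_pure_comp, List.map_eq_map, List.map_map]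
  rfl

@[simp]
theorem length_word (x : ℤ → A) (i : ℤ) (n : ℕ) : (word x i n).length = n := by
  simp [word_eq_map_range]

theorem word_add (x : ℤ → A) (i : ℤ) (m n : ℕ) :
    word x i (m + n) = word x i m ++ word x (i + m) n := by
  simp [word_eq_map_range, List.range_add, add_assoc]

theorem word_shiftBy [TopologicalSpace A] (k : ℤ) (x : ℤ → A) (i : ℤ) (n : ℕ) :
    word (shiftBy k x) i n = word x (i + k) n := by
  simp [word_eq_map_range, add_right_comm]

theorem isOpen_cylinder [TopologicalSpace A] [DiscreteTopology A] (w : List A) (i : ℤ) :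
    IsOpen (cylinder w i) := by
  have hcyl : cylinder w i =
      ⋂ k : Fin w.length, (fun x : ℤ → A => x (i + (k : ℕ))) ⁻¹' {w[k]} := by
    ext x
    simp [cylinder, List.ext_getElem_iff, word_eq_map_range, Fin.forall_iff]
  rw [hcyl]
  exact isOpen_iInter_of_finite fun k => (isOpen_discrete _).preimage (continuous_apply _)

theorem IsTopologicallyMixing.isMixing [TopologicalSpace A] [DiscreteTopology A]
    {X : Set (ℤ → A)} (hX : IsTopologicallyMixing X) : IsMixing X := by
  rintro u ⟨z, hz, i, hzi⟩ v ⟨z', hz', j, hzj⟩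
  have hmeet := hX _ _ (isOpen_cylinder u i) (isOpen_cylinder v j) ⟨z, hz, hzi⟩ ⟨z', hz', hzj⟩
  let offset (n : ℕ) : ℤ := i + u.length + n - j
  have hoffset : Injective offset := fun m n h => by
    simp only [offset] at h
    lia
  obtain ⟨N, hN⟩ := eventually_atTop.1
    (Nat.cofinite_eq_atTop ▸ hoffset.tendsto_cofinite.eventually hmeet)
  refine ⟨N, fun n hn => ?_⟩
  obtain ⟨y, hy, hyu, hyv⟩ := hN n hn
  have hyu' : word y i u.length = u := hyu
  have hyv' : word y (i + u.length + n) v.length = v := by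
    rw [mem_preimage, cylinder, mem_ofPred_eq, word_shiftBy] at hyv
    rwa [show i + u.length + n = j + offset n by simp only [offset]; ring]
  refine ⟨word y (i + u.length) n, length_word .., y, hy, i, ?_⟩
  simp only [List.length_append, length_word, word_add, Nat.cast_add, ← add_assoc, hyu', hyv']

end Words

/-- if `f` is the identity on its generic limit set, then `ω̃(f)` is a mixing
subshift. -/
theorem stmt8 [Fintype A] [Nonempty A] [TopologicalSpace A] [DiscreteTopology A]
    (f : (ℤ → A) → (ℤ → A)) (hf : IsCA f)
    (hid : ∀ x ∈ genLimitSet f, f x = x) :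
    IsClosed (genLimitSet f) ∧ shift '' genLimitSet f = genLimitSet f ∧
      IsMixing (genLimitSet f) := by
  have hconv : ∀ᶠ x in residual (ℤ → A), ∃ y, Tendsto (fun t => f^[t] x) atTop (nhds y) := by
    filter_upwards [realm_genLimitSet_mem_residual f] with x hx
    exact exists_tendsto_iterate_of_forall_mapClusterPt_isFixedPt hf.1 fun y hy => hid y (hx hy)
  refine ⟨isClosed_genLimitSet f, ?_, (isTopologicallyMixing_genLimitSet hf hconv).isMixing⟩
  rw [← coe_shiftBy_one]
  exact image_genLimitSet_of_commute (hf.commute_shiftBy 1)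

end Gls
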